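/- arXiv:1301.0156 — 2 statements merged into one kernel-verified Lean document; each statement's English description precedes it below -/
import Mathlib

section
/- Let ξ, η ∈ ℝ. The double inequality ξ·[(ln x − 9 ln(1+x) + 8 ln(2+x))/24 − (18 + 33x + 14x²)/(48(1+x)²(2+x))] < ψ(x) − (28x⁴ + 87x³ + 73x² + 3x − 12)/(6x(x+1)³(x+2)) − (43 ln(x+1) − 37 ln(x+2))/6 < η·[(ln x − 9 ln(1+x) + 8 ln(2+x))/24 − (18 + 33x + 14x²)/(48(1+x)²(2+x))] holds for all x ∈ (0,∞) if and only if ξ ≥ 4 and η ≤ 0. -/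
/-- The digamma function `ψ(x) = Γ'(x)/Γ(x)`. -/
noncomputable def digamma (x : ℝ) : ℝ := deriv Real.Gamma x / Real.Gamma x

/-!
Write `R` for the quantity in the middle of the double inequality and `B` for the bracket. Both
tend to `0` at infinity. A function `f` tending to `0` is negative on `[a, ∞)` as soon as
`f x - f (x + 1)` is strictly increasing there: this difference tends to `0`, so it is negative, so
`f` increases along unit steps. The functional equation of `ψ` makes `R x - R (x + 1)` elementary,
so for `f = p R + q B` the criterion becomes the positivity of a polynomial. This yields `B < 0` and
`4 B < R < 0`. The derivatives of `R x - R (x + 1)` and `B x - B (x + 1)` have quotient tending to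
`4` at infinity, which gives `R x < ξ B x` for large `x` when `ξ < 4`. Near `0`, `B` tends to `-∞`
while `R` stays bounded below, which rules out `η > 0`.
-/

open Filter Topology

section Telescoping

theorem lt_of_tendsto_of_strictMonoOn_Ici {α β : Type*} [LinearOrder α] [NoMaxOrder α]
    [Preorder β] [TopologicalSpace β] [OrderClosedTopology β] {f : α → β} {a : α} {l : β}
    (hf : StrictMonoOn f (Set.Ici a)) (hlim : Tendsto f atTop (𝓝 l)) : f a < l := by
  obtain ⟨b, hab⟩ := exists_gt a
  have hbl : f b ≤ l := by
    have : Nonempty α := ⟨a⟩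
    refine ge_of_tendsto hlim ?_
    filter_upwards [eventually_ge_atTop b] with y hby
    exact hf.monotoneOn hab.le (hab.le.trans hby) hby
  exact (hf Set.self_mem_Ici hab.le hab).trans_le hbl

variable {𝕜 : Type*} [Field 𝕜] [LinearOrder 𝕜] [IsStrictOrderedRing 𝕜] [Archimedean 𝕜]

theorem lt_of_tendsto_of_lt_add_const {β : Type*} [Preorder β] [TopologicalSpace β]
    [OrderClosedTopology β] {f : 𝕜 → β} {a c : 𝕜} {l : β} (hc : 0 < c)
    (hstep : ∀ x, a ≤ x → f x < f (x + c)) (hlim : Tendsto f atTop (𝓝 l)) : f a < l := by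
  have hmono : StrictMono fun n : ℕ => f (a + n * c) := by
    refine strictMono_nat_of_lt_succ fun n => ?_
    have := hstep (a + n * c) (le_add_of_nonneg_right (by positivity))
    simpa only [Nat.cast_succ, add_mul, one_mul, add_assoc] using this
  have hseq : Tendsto (fun n : ℕ => f (a + n * c)) atTop (𝓝 l) :=
    hlim.comp <| tendsto_atTop_add_const_left _ _ <|
      tendsto_natCast_atTop_atTop.atTop_mul_const hc
  simpa using (hmono zero_lt_one).trans_le (hmono.monotone.ge_of_tendsto hseq 1)

theorem lt_of_tendsto_of_strictMonoOn_sub_shift {G : Type*} [AddCommGroup G]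
    [PartialOrder G] [IsOrderedAddMonoid G] [TopologicalSpace G] [OrderClosedTopology G]
    [ContinuousSub G]
    {f : 𝕜 → G} {a c : 𝕜} {l : G} (hc : 0 < c)
    (hmono : StrictMonoOn (fun x => f x - f (x + c)) (Set.Ici a))
    (hlim : Tendsto f atTop (𝓝 l)) : f a < l := by
  have hdiff : Tendsto (fun x => f x - f (x + c)) atTop (𝓝 0) := by
    simpa using hlim.sub (hlim.comp (tendsto_atTop_add_const_right _ c tendsto_id))
  refine lt_of_tendsto_of_lt_add_const hc (fun x hx => sub_neg.mp ?_) hlim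
  exact lt_of_tendsto_of_strictMonoOn_Ici (f := fun x => f x - f (x + c))
    (hmono.mono (Set.Ici_subset_Ici.mpr hx)) hdiff

end Telescoping

section ElementaryFunctions

theorem hasDerivAt_const_div_add_pow {𝕜 : Type*} [NontriviallyNormedField 𝕜] (c : 𝕜) {a x : 𝕜}
    (n : ℕ) (hx : x + a ≠ 0) :
    HasDerivAt (fun y => c / (y + a) ^ n) (-(n * c) / (x + a) ^ (n + 1)) x := by
  have h : HasDerivAt (fun y => c * y ^ (-n : ℤ)) (c * ((-n : ℤ) * (x + a) ^ (-n - 1 : ℤ)))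
      (x + a) := (hasDerivAt_zpow (-n) (x + a) (.inl hx)).const_mul c
  refine ((h.comp_add_const x a).congr_deriv ?_).congr_of_eventuallyEq (.of_forall fun y => ?_)
  · rw [← neg_add', zpow_neg, ← Nat.cast_add_one, zpow_natCast, div_eq_mul_inv]
    push_cast
    ring
  · simp only [zpow_neg, zpow_natCast, div_eq_mul_inv]

theorem hasDerivAt_log_add_const {a x : ℝ} (hx : x + a ≠ 0) :
    HasDerivAt (fun y => Real.log (y + a)) (1 / (x + a)) x :=
  ((hasDerivAt_id' x).add_const a).log hx

theorem tendsto_const_div_add_pow_atTop {𝕜 : Type*} [Field 𝕜] [LinearOrder 𝕜]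
    [IsStrictOrderedRing 𝕜] [TopologicalSpace 𝕜] [OrderTopology 𝕜] (a c : 𝕜) {n : ℕ} (hn : n ≠ 0) :
    Tendsto (fun x => c / (x + a) ^ n) atTop (𝓝 0) :=
  tendsto_const_nhds.div_atTop <|
    (tendsto_pow_atTop hn).comp (tendsto_atTop_add_const_right _ a tendsto_id)

end ElementaryFunctions

section Digamma

theorem ne_neg_natCast_of_pos {x : ℝ} (hx : 0 < x) (m : ℕ) : x ≠ -m :=
  ((neg_nonpos.mpr m.cast_nonneg).trans_lt hx).ne'

theorem digamma_add_one {x : ℝ} (hx : ∀ m : ℕ, x ≠ -m) : digamma (x + 1) = digamma x + 1 / x := by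
  have hx0 : x ≠ 0 := by simpa using hx 0
  have hrec : (fun y => Real.Gamma (y + 1)) =ᶠ[𝓝 x] fun y => y * Real.Gamma y :=
    (eventually_ne_nhds hx0).mono fun y hy => Real.Gamma_add_one hy
  have hderiv : deriv Real.Gamma (x + 1) = Real.Gamma x + x * deriv Real.Gamma x := by
    rw [← deriv_comp_add_const, hrec.deriv_eq]
    simpa using ((hasDerivAt_id' x).fun_mul (Real.differentiableAt_Gamma hx).hasDerivAt).deriv
  have hΓ : Real.Gamma x ≠ 0 := Real.Gamma_ne_zero hx
  rw [digamma, digamma, hderiv, Real.Gamma_add_one hx0]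
  field_simp
  ring

theorem hasDerivAt_log_Gamma {x : ℝ} (hx : ∀ m : ℕ, x ≠ -m) :
    HasDerivAt (Real.log ∘ Real.Gamma) (digamma x) x :=
  (Real.differentiableAt_Gamma hx).hasDerivAt.log (Real.Gamma_ne_zero hx)

theorem slope_log_Gamma_add_one {x : ℝ} (hx : ∀ m : ℕ, x ≠ -m) :
    slope (Real.log ∘ Real.Gamma) x (x + 1) = Real.log x := by
  have hx0 : x ≠ 0 := by simpa using hx 0
  rw [slope_def_field, Function.comp_apply, Function.comp_apply, Real.Gamma_add_one hx0,
    Real.log_mul hx0 (Real.Gamma_ne_zero hx)]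
  simp

theorem digamma_le_log {x : ℝ} (hx : 0 < x) : digamma x ≤ Real.log x := by
  have hpole := ne_neg_natCast_of_pos hx
  rw [← slope_log_Gamma_add_one hpole]
  exact Real.convexOn_log_Gamma.le_slope_of_hasDerivAt hx (add_pos hx one_pos) (lt_add_one x)
    (hasDerivAt_log_Gamma hpole)

theorem log_sub_inv_le_digamma {x : ℝ} (hx : 0 < x) : Real.log x - 1 / x ≤ digamma x := by
  have hpole := ne_neg_natCast_of_pos hx
  rw [sub_le_iff_le_add, ← digamma_add_one hpole, ← slope_log_Gamma_add_one hpole]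
  exact Real.convexOn_log_Gamma.slope_le_of_hasDerivAt hx (add_pos hx one_pos) (lt_add_one x)
    (hasDerivAt_log_Gamma (ne_neg_natCast_of_pos (add_pos hx one_pos)))

theorem tendsto_digamma_sub_log_atTop :
    Tendsto (fun x => digamma x - Real.log x) atTop (𝓝 0) := by
  have hinv : Tendsto (fun x : ℝ => -(1 / x)) atTop (𝓝 0) := by
    simpa using (tendsto_inv_atTop_zero (𝕜 := ℝ)).neg
  refine tendsto_of_tendsto_of_tendsto_of_le_of_le' hinv tendsto_const_nhds ?_ ?_
  · filter_upwards [eventually_gt_atTop 0] with x hx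
    linarith [log_sub_inv_le_digamma hx]
  · filter_upwards [eventually_gt_atTop 0] with x hx
    linarith [digamma_le_log hx]

end Digamma

section RemainderAndCorrection

/-- The quantity in the middle of the double inequality: the error of an elementary approximation
to `ψ`. -/
noncomputable def digammaRemainder (x : ℝ) : ℝ :=
  digamma x - (28 * x ^ 4 + 87 * x ^ 3 + 73 * x ^ 2 + 3 * x - 12) /
    (6 * x * (x + 1) ^ 3 * (x + 2)) - (43 * Real.log (x + 1) - 37 * Real.log (x + 2)) / 6

/-- The elementary function whose multiples by `ξ` and `η` bound `digammaRemainder`. -/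
noncomputable def digammaCorrection (x : ℝ) : ℝ :=
  (Real.log x - 9 * Real.log (1 + x) + 8 * Real.log (2 + x)) / 24 -
    (18 + 33 * x + 14 * x ^ 2) / (48 * (1 + x) ^ 2 * (2 + x))

/-- The elementary approximation to `ψ(x + 1)`, in partial fractions, whose error is
`digammaRemainder x`. Passing from `ψ(x)` to `ψ(x + 1)` absorbs the pole at `0`. -/
noncomputable def digammaSuccApprox (x : ℝ) : ℝ :=
  7 / 2 / (x + 1) - 1 / (x + 1) ^ 2 + 1 / 6 / (x + 1) ^ 3 + 13 / 6 / (x + 2) +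
    43 / 6 * Real.log (x + 1) - 37 / 6 * Real.log (x + 2)

theorem digammaRemainder_eq {x : ℝ} (hx : 0 < x) :
    digammaRemainder x = digamma (x + 1) - digammaSuccApprox x := by
  have hfrac : (28 * x ^ 4 + 87 * x ^ 3 + 73 * x ^ 2 + 3 * x - 12) /
      (6 * x * (x + 1) ^ 3 * (x + 2)) =
      -(1 / x) + 7 / 2 / (x + 1) - 1 / (x + 1) ^ 2 + 1 / 6 / (x + 1) ^ 3 + 13 / 6 / (x + 2) := by
    field_simp
    ring
  rw [digammaRemainder, digammaSuccApprox, hfrac, digamma_add_one (ne_neg_natCast_of_pos hx)]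
  ring

theorem digammaCorrection_eq {x : ℝ} (hx : 0 < x) :
    digammaCorrection x =
      (Real.log x - 9 * Real.log (x + 1) + 8 * Real.log (x + 2)) / 24 -
        (1 / 8 / (x + 1) - 1 / 48 / (x + 1) ^ 2 + 1 / 6 / (x + 2)) := by
  rw [digammaCorrection, add_comm 1 x, add_comm 2 x]
  congr 1
  field_simp
  ring

theorem tendsto_digammaRemainder_atTop : Tendsto digammaRemainder atTop (𝓝 0) := by
  have hψ := tendsto_digamma_sub_log_atTop.comp
    (tendsto_atTop_add_const_right atTop (1 : ℝ) tendsto_id)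
  have hlog := (Real.tendsto_log_comp_add_sub_log 2).sub (Real.tendsto_log_comp_add_sub_log 1)
  have hfrac := (((tendsto_const_div_add_pow_atTop (1 : ℝ) (7 / 2) one_ne_zero).sub
    (tendsto_const_div_add_pow_atTop (1 : ℝ) 1 two_ne_zero)).add
    (tendsto_const_div_add_pow_atTop (1 : ℝ) (1 / 6) three_ne_zero)).add
    (tendsto_const_div_add_pow_atTop (2 : ℝ) (13 / 6) one_ne_zero)
  have hsum := (hψ.sub hfrac).add (hlog.const_mul (37 / 6))
  simp only [sub_zero, add_zero, mul_zero] at hsum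
  refine hsum.congr' ?_
  filter_upwards [eventually_gt_atTop 0] with x hx
  simp only [digammaRemainder_eq hx, digammaSuccApprox, Function.comp_apply, id_eq, pow_one]
  ring

theorem tendsto_digammaCorrection_atTop : Tendsto digammaCorrection atTop (𝓝 0) := by
  have hlog := ((Real.tendsto_log_comp_add_sub_log 2).const_mul (1 / 3)).sub
    ((Real.tendsto_log_comp_add_sub_log 1).const_mul (3 / 8))
  have hfrac := ((tendsto_const_div_add_pow_atTop (1 : ℝ) (1 / 8) one_ne_zero).sub
    (tendsto_const_div_add_pow_atTop (1 : ℝ) (1 / 48) two_ne_zero)).add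
    (tendsto_const_div_add_pow_atTop (2 : ℝ) (1 / 6) one_ne_zero)
  have hsum := hlog.sub hfrac
  simp only [sub_zero, add_zero, mul_zero] at hsum
  refine hsum.congr' ?_
  filter_upwards [eventually_gt_atTop 0] with x hx
  simp only [digammaCorrection_eq hx, pow_one]
  ring

theorem hasDerivAt_digammaSuccApprox {x : ℝ} (h1 : x + 1 ≠ 0) (h2 : x + 2 ≠ 0) :
    HasDerivAt digammaSuccApprox
      (-(7 / 2) / (x + 1) ^ 2 + 2 / (x + 1) ^ 3 - 1 / 2 / (x + 1) ^ 4 - 13 / 6 / (x + 2) ^ 2 +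
        43 / 6 / (x + 1) - 37 / 6 / (x + 2)) x := by
  have hsum := (((((hasDerivAt_const_div_add_pow (7 / 2) 1 h1).sub
    (hasDerivAt_const_div_add_pow 1 2 h1)).add (hasDerivAt_const_div_add_pow (1 / 6) 3 h1)).add
    (hasDerivAt_const_div_add_pow (13 / 6) 1 h2)).add
    ((hasDerivAt_log_add_const h1).const_mul (43 / 6))).sub
    ((hasDerivAt_log_add_const h2).const_mul (37 / 6))
  refine (hsum.congr_deriv ?_).congr_of_eventuallyEq (.of_forall fun y => ?_)
  · push_cast
    ring
  · simp [digammaSuccApprox]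

theorem hasDerivAt_digammaCorrection {x : ℝ} (hx : 0 < x) :
    HasDerivAt digammaCorrection
      ((1 / x - 9 / (x + 1) + 8 / (x + 2)) / 24 +
        1 / 8 / (x + 1) ^ 2 - 1 / 24 / (x + 1) ^ 3 + 1 / 6 / (x + 2) ^ 2) x := by
  have h1 : x + 1 ≠ 0 := by positivity
  have h2 : x + 2 ≠ 0 := by positivity
  have hsum := ((((Real.hasDerivAt_log hx.ne').sub
    ((hasDerivAt_log_add_const h1).const_mul 9)).add
    ((hasDerivAt_log_add_const h2).const_mul 8)).div_const 24).sub
    (((hasDerivAt_const_div_add_pow (1 / 8) 1 h1).sub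
    (hasDerivAt_const_div_add_pow (1 / 48) 2 h1)).add (hasDerivAt_const_div_add_pow (1 / 6) 1 h2))
  refine (hsum.congr_deriv ?_).congr_of_eventuallyEq ?_
  · push_cast
    ring
  · filter_upwards [eventually_gt_nhds hx] with y hy
    simp [digammaCorrection_eq hy]

end RemainderAndCorrection

section UnitStepDifferences

/-- The common denominator of the derivatives of `x ↦ f x - f (x + 1)` for
`f = digammaRemainder` and `f = digammaCorrection`. -/
noncomputable def stepDenominator (x : ℝ) : ℝ :=
  24 * x * (x + 1) ^ 4 * (x + 2) ^ 4 * (x + 3) ^ 2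

/-- The numerator, over `stepDenominator`, of the derivative of
`x ↦ digammaRemainder x - digammaRemainder (x + 1)`. -/
noncomputable def remainderStepNumerator (x : ℝ) : ℝ :=
  308 * x + 1016 * x ^ 2 + 1676 * x ^ 3 + 1376 * x ^ 4 + 536 * x ^ 5 + 80 * x ^ 6

/-- The numerator, over `stepDenominator`, of the derivative of
`x ↦ digammaCorrection x - digammaCorrection (x + 1)`. -/
noncomputable def correctionStepNumerator (x : ℝ) : ℝ :=
  144 + 638 * x + 1181 * x ^ 2 + 1155 * x ^ 3 + 623 * x ^ 4 + 175 * x ^ 5 + 20 * x ^ 6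

theorem stepDenominator_pos {x : ℝ} (hx : 0 < x) : 0 < stepDenominator x := by
  unfold stepDenominator
  positivity

theorem digammaRemainder_sub_digammaRemainder_add_one {x : ℝ} (hx : 0 < x) :
    digammaRemainder x - digammaRemainder (x + 1) =
      digammaSuccApprox (x + 1) - digammaSuccApprox x - 1 / (x + 1) := by
  have hx1 : 0 < x + 1 := by positivity
  rw [digammaRemainder_eq hx, digammaRemainder_eq hx1,
    digamma_add_one (ne_neg_natCast_of_pos hx1)]
  ring

theorem hasDerivAt_digammaRemainder_sub_shift {x : ℝ} (hx : 0 < x) :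
    HasDerivAt (fun y => digammaRemainder y - digammaRemainder (y + 1))
      (remainderStepNumerator x / stepDenominator x) x := by
  have hshift := (hasDerivAt_digammaSuccApprox (x := x + 1) (by positivity)
    (by positivity)).comp_add_const x 1
  have happrox := hasDerivAt_digammaSuccApprox (x := x) (by positivity) (by positivity)
  have hinv := hasDerivAt_const_div_add_pow (1 : ℝ) (a := 1) (x := x) 1 (by positivity)
  refine (((hshift.sub happrox).sub hinv).congr_deriv ?_).congr_of_eventuallyEq ?_
  · rw [remainderStepNumerator, stepDenominator, show x + 1 + 1 = x + 2 by ring,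
      show x + 1 + 2 = x + 3 by ring]
    push_cast
    field_simp
    ring
  · filter_upwards [eventually_gt_nhds hx] with y hy
    simpa using digammaRemainder_sub_digammaRemainder_add_one hy

theorem hasDerivAt_digammaCorrection_sub_shift {x : ℝ} (hx : 0 < x) :
    HasDerivAt (fun y => digammaCorrection y - digammaCorrection (y + 1))
      (correctionStepNumerator x / stepDenominator x) x := by
  have hshift := (hasDerivAt_digammaCorrection (add_pos hx one_pos)).comp_add_const x 1
  refine ((hasDerivAt_digammaCorrection hx).sub hshift).congr_deriv ?_
  rw [correctionStepNumerator, stepDenominator, show x + 1 + 1 = x + 2 by ring,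
    show x + 1 + 2 = x + 3 by ring]
  field_simp
  ring

theorem strictMonoOn_mul_remainder_add_mul_correction_sub_shift {p q a : ℝ} (ha : 0 < a)
    (hpos : ∀ x, a ≤ x → 0 < p * remainderStepNumerator x + q * correctionStepNumerator x) :
    StrictMonoOn (fun x => p * digammaRemainder x + q * digammaCorrection x -
      (p * digammaRemainder (x + 1) + q * digammaCorrection (x + 1))) (Set.Ici a) := by
  have hderiv : ∀ x, a ≤ x → HasDerivAt
      (fun x => p * digammaRemainder x + q * digammaCorrection x -
        (p * digammaRemainder (x + 1) + q * digammaCorrection (x + 1)))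
      ((p * remainderStepNumerator x + q * correctionStepNumerator x) / stepDenominator x) x := by
    intro x hx
    have hx0 : 0 < x := ha.trans_le hx
    have hsum := ((hasDerivAt_digammaRemainder_sub_shift hx0).const_mul p).fun_add
      ((hasDerivAt_digammaCorrection_sub_shift hx0).const_mul q)
    refine (hsum.congr_deriv ?_).congr_of_eventuallyEq (.of_forall fun y => ?_)
    · ring
    · ring
  refine strictMonoOn_of_hasDerivWithinAt_pos (convex_Ici a)
    (fun x hx => (hderiv x hx).continuousAt.continuousWithinAt)
    (fun x hx => (hderiv x (interior_subset hx)).hasDerivWithinAt) fun x hx => ?_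
  have hx : a ≤ x := interior_subset hx
  exact div_pos (hpos x hx) (stepDenominator_pos (ha.trans_le hx))

theorem mul_remainder_add_mul_correction_neg {p q a : ℝ} (ha : 0 < a)
    (hpos : ∀ x, a ≤ x → 0 < p * remainderStepNumerator x + q * correctionStepNumerator x) :
    p * digammaRemainder a + q * digammaCorrection a < 0 := by
  refine lt_of_tendsto_of_strictMonoOn_sub_shift
    (f := fun x => p * digammaRemainder x + q * digammaCorrection x) one_pos
    (strictMonoOn_mul_remainder_add_mul_correction_sub_shift ha hpos) ?_
  simpa using (tendsto_digammaRemainder_atTop.const_mul p).add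
    (tendsto_digammaCorrection_atTop.const_mul q)

theorem remainderStepNumerator_pos {x : ℝ} (hx : 0 < x) : 0 < remainderStepNumerator x := by
  unfold remainderStepNumerator
  positivity

theorem correctionStepNumerator_pos {x : ℝ} (hx : 0 < x) : 0 < correctionStepNumerator x := by
  unfold correctionStepNumerator
  positivity

theorem remainderStepNumerator_lt_four_mul {x : ℝ} (hx : 0 < x) :
    remainderStepNumerator x < 4 * correctionStepNumerator x := by
  have hdiff : 4 * correctionStepNumerator x - remainderStepNumerator x =
      576 + 2244 * x + 3708 * x ^ 2 + 2944 * x ^ 3 + 1116 * x ^ 4 + 164 * x ^ 5 := by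
    unfold correctionStepNumerator remainderStepNumerator
    ring
  rw [← sub_pos, hdiff]
  positivity

-- The quotient of the two numerators tends to `4` with error `O(1 / x)`. Any constant above
-- `164 / 20`, the ratio of the leading coefficients, works for large `x`, and `9` for all `x > 0`.
theorem mul_four_mul_correctionStepNumerator_sub_lt {x : ℝ} (hx : 0 < x) :
    x * (4 * correctionStepNumerator x - remainderStepNumerator x) <
      9 * correctionStepNumerator x := by
  have hdiff : 9 * correctionStepNumerator x -
      x * (4 * correctionStepNumerator x - remainderStepNumerator x) =
      1296 + 5166 * x + 8385 * x ^ 2 + 6687 * x ^ 3 + 2663 * x ^ 4 + 459 * x ^ 5 +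
        16 * x ^ 6 := by
    unfold correctionStepNumerator remainderStepNumerator
    ring
  rw [← sub_pos, hdiff]
  positivity

end UnitStepDifferences

section Bounds

theorem digammaCorrection_neg {x : ℝ} (hx : 0 < x) : digammaCorrection x < 0 := by
  simpa using mul_remainder_add_mul_correction_neg (p := 0) (q := 1) hx fun y hy => by
    simpa using correctionStepNumerator_pos (hx.trans_le hy)

theorem digammaRemainder_neg {x : ℝ} (hx : 0 < x) : digammaRemainder x < 0 := by
  simpa using mul_remainder_add_mul_correction_neg (p := 1) (q := 0) hx fun y hy => by
    simpa using remainderStepNumerator_pos (hx.trans_le hy)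

theorem four_mul_digammaCorrection_lt {x : ℝ} (hx : 0 < x) :
    4 * digammaCorrection x < digammaRemainder x := by
  have hneg : -1 * digammaRemainder x + 4 * digammaCorrection x < 0 :=
    mul_remainder_add_mul_correction_neg hx fun y hy => by
      linarith [remainderStepNumerator_lt_four_mul (hx.trans_le hy)]
  linarith

theorem exists_digammaRemainder_lt_mul {c : ℝ} (hc : c < 4) :
    ∃ x, 0 < x ∧ digammaRemainder x < c * digammaCorrection x := by
  have hc' : 0 < 4 - c := sub_pos.mpr hc
  have ha : 0 < 9 / (4 - c) := by positivity
  refine ⟨9 / (4 - c), ha, ?_⟩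
  have hpos : ∀ y, 9 / (4 - c) ≤ y →
      0 < 1 * remainderStepNumerator y + -c * correctionStepNumerator y := by
    intro y hy
    have hy0 : 0 < y := ha.trans_le hy
    have hcy : 9 ≤ y * (4 - c) := (div_le_iff₀ hc').mp hy
    have hcorr := mul_le_mul_of_nonneg_right hcy (correctionStepNumerator_pos hy0).le
    have hgap := mul_four_mul_correctionStepNumerator_sub_lt hy0
    refine pos_of_mul_pos_right (a := y) ?_ hy0.le
    linarith
  linarith [mul_remainder_add_mul_correction_neg ha hpos]

theorem tendsto_digammaCorrection_nhdsGT_zero : Tendsto digammaCorrection (𝓝[>] 0) atBot := by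
  have hcont : ContinuousAt (fun x : ℝ => (-9 * Real.log (1 + x) + 8 * Real.log (2 + x)) / 24 -
      (18 + 33 * x + 14 * x ^ 2) / (48 * (1 + x) ^ 2 * (2 + x))) 0 := by
    fun_prop (disch := norm_num)
  have hlog := Real.tendsto_log_nhdsGT_zero.atBot_div_const (by norm_num : (0 : ℝ) < 24)
  refine (hlog.atBot_add (hcont.tendsto.mono_left nhdsWithin_le_nhds)).congr fun x => ?_
  rw [digammaCorrection]
  ring

theorem log_sub_inv_sub_approx_le_digammaRemainder {x : ℝ} (hx : 0 < x) :
    Real.log (x + 1) - 1 / (x + 1) - digammaSuccApprox x ≤ digammaRemainder x := by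
  rw [digammaRemainder_eq hx]
  exact sub_le_sub_right (log_sub_inv_le_digamma (by positivity)) _

theorem exists_mul_digammaCorrection_lt {c : ℝ} (hc : 0 < c) :
    ∃ x, 0 < x ∧ c * digammaCorrection x < digammaRemainder x := by
  have hcont : ContinuousAt (fun x : ℝ => Real.log (x + 1) - 1 / (x + 1) - digammaSuccApprox x)
      0 := by
    have := (hasDerivAt_digammaSuccApprox (x := 0) (by norm_num) (by norm_num)).continuousAt
    fun_prop (disch := norm_num)
  have hlim := (tendsto_digammaCorrection_nhdsGT_zero.const_mul_atBot hc).atBot_add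
    (hcont.tendsto.mono_left nhdsWithin_le_nhds).neg
  obtain ⟨x, hneg, hx⟩ := ((hlim.eventually_lt_atBot 0).and self_mem_nhdsWithin).exists
  exact ⟨x, hx, (sub_neg.mp hneg).trans_le (log_sub_inv_sub_approx_le_digammaRemainder hx)⟩

theorem forall_mul_digammaCorrection_lt_iff {c : ℝ} :
    (∀ x ∈ Set.Ioi (0 : ℝ), c * digammaCorrection x < digammaRemainder x) ↔ 4 ≤ c := by
  refine ⟨fun h => ?_, fun hc x hx => ?_⟩
  · by_contra! hc
    obtain ⟨x, hx, hlt⟩ := exists_digammaRemainder_lt_mul hc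
    exact (h x hx).asymm hlt
  · exact (mul_le_mul_of_nonpos_right hc (digammaCorrection_neg hx).le).trans_lt
      (four_mul_digammaCorrection_lt hx)

theorem forall_lt_mul_digammaCorrection_iff {c : ℝ} :
    (∀ x ∈ Set.Ioi (0 : ℝ), digammaRemainder x < c * digammaCorrection x) ↔ c ≤ 0 := by
  refine ⟨fun h => ?_, fun hc x hx => ?_⟩
  · by_contra! hc
    obtain ⟨x, hx, hlt⟩ := exists_mul_digammaCorrection_lt hc
    exact (h x hx).asymm hlt
  · exact (digammaRemainder_neg hx).trans_le
      (mul_nonneg_of_nonpos_of_nonpos hc (digammaCorrection_neg hx).le)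

end Bounds

theorem stmt_7 (xi eta : ℝ) :
    (∀ x : ℝ, x ∈ Set.Ioi (0 : ℝ) →
      xi * ((Real.log x - 9 * Real.log (1 + x) + 8 * Real.log (2 + x)) / 24 -
          (18 + 33 * x + 14 * x ^ 2) / (48 * (1 + x) ^ 2 * (2 + x))) <
        digamma x -
          (28 * x ^ 4 + 87 * x ^ 3 + 73 * x ^ 2 + 3 * x - 12) /
            (6 * x * (x + 1) ^ 3 * (x + 2)) -
          (43 * Real.log (x + 1) - 37 * Real.log (x + 2)) / 6 ∧
      digamma x -
          (28 * x ^ 4 + 87 * x ^ 3 + 73 * x ^ 2 + 3 * x - 12) /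
            (6 * x * (x + 1) ^ 3 * (x + 2)) -
          (43 * Real.log (x + 1) - 37 * Real.log (x + 2)) / 6 <
        eta * ((Real.log x - 9 * Real.log (1 + x) + 8 * Real.log (2 + x)) / 24 -
          (18 + 33 * x + 14 * x ^ 2) / (48 * (1 + x) ^ 2 * (2 + x)))) ↔
    4 ≤ xi ∧ eta ≤ 0 := by
  rw [← forall_mul_digammaCorrection_lt_iff, ← forall_lt_mul_digammaCorrection_iff]
  exact forall₂_and
end

section
/- The function Q(t) = 2e^{2t} − e^t(t² − 6t + 18) + 8(t + 2) is strictly positive for all t ∈ (0,∞). -/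
/-!
The function `G t = 2 * exp (2 * t) - exp t * (t ^ 2 - 6 * t + 18)` satisfies `G 0 = -16` and
`G' 0 = -8`, so `-8 * (t + 2)` is its tangent line at `0`. Its second derivative is
`exp t * (8 * exp t - (t ^ 2 - 2 * t + 8))`, which is positive for `0 < t` because
`1 + t + t ^ 2 / 2 ≤ exp t`. Hence `G` is strictly convex on `[0, ∞)` and lies strictly above
that tangent line on `(0, ∞)`.
-/

open Real Set

/-- The exponential polynomial `a * e ^ (2 * t) - e ^ t * (t ^ 2 - b * t + c)`. The quadratic is
kept monic because differentiation preserves its leading coefficient, so the family is closed under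
taking derivatives. -/
noncomputable def expQuad (a b c t : ℝ) : ℝ :=
  a * exp (2 * t) - exp t * (t ^ 2 - b * t + c)

section

variable {a b c t : ℝ}

lemma hasDerivAt_expQuad (a b c t : ℝ) :
    HasDerivAt (expQuad a b c) (expQuad (2 * a) (b - 2) (c - b) t) t := by
  have hexp : HasDerivAt (fun s ↦ exp (2 * s)) (exp (2 * t) * (2 * 1)) t :=
    ((hasDerivAt_id t).const_mul 2).exp
  have hquad : HasDerivAt (fun s ↦ s ^ 2 - b * s + c) (2 * t - b) t := by
    simpa using ((hasDerivAt_pow 2 t).sub ((hasDerivAt_id t).const_mul b)).add_const c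
  refine ((hexp.const_mul a).sub ((hasDerivAt_exp t).mul hquad)).congr_deriv ?_
  unfold expQuad
  ring

lemma deriv_expQuad (a b c : ℝ) :
    deriv (expQuad a b c) = expQuad (2 * a) (b - 2) (c - b) :=
  funext fun t ↦ (hasDerivAt_expQuad a b c t).deriv

lemma expQuad_pos (ha : 2 ≤ a) (hab : 0 < a + b) (hca : c ≤ a) (ht : 0 < t) :
    0 < expQuad a b c t := by
  have hquad : t ^ 2 - b * t + c < a * exp t :=
    calc t ^ 2 - b * t + c
        < a * (1 + t + t ^ 2 / 2) := by nlinarith [mul_pos hab ht, sq_nonneg t]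
      _ ≤ a * exp t := by gcongr; exact quadratic_le_exp_of_nonneg ht.le
  have hfactor : expQuad a b c t = exp t * (a * exp t - (t ^ 2 - b * t + c)) := by
    rw [expQuad, two_mul, exp_add]
    ring
  rw [hfactor]
  exact mul_pos (exp_pos t) (sub_pos.2 hquad)

lemma strictConvexOn_expQuad (ha : 1 / 2 ≤ a) (hab : 4 < 4 * a + b) (hc : c - 2 * b + 2 ≤ 4 * a) :
    StrictConvexOn ℝ (Ici 0) (expQuad a b c) := by
  have hcont : Continuous (expQuad a b c) :=
    continuous_iff_continuousAt.2 fun t ↦ (hasDerivAt_expQuad a b c t).continuousAt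
  refine strictConvexOn_of_deriv2_pos (convex_Ici 0) hcont.continuousOn fun t ht ↦ ?_
  rw [interior_Ici] at ht
  change 0 < deriv (deriv (expQuad a b c)) t
  rw [deriv_expQuad, deriv_expQuad]
  exact expQuad_pos (by linarith) (by linarith) (by linarith) ht

lemma tangent_at_zero_lt_expQuad (ha : 1 / 2 ≤ a) (hab : 4 < 4 * a + b)
    (hc : c - 2 * b + 2 ≤ 4 * a) (ht : 0 < t) :
    (a - c) + (2 * a + b - c) * t < expQuad a b c t := by
  have hslope : expQuad (2 * a) (b - 2) (c - b) 0 < slope (expQuad a b c) 0 t :=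
    (strictConvexOn_expQuad ha hab hc).lt_slope_of_hasDerivAt self_mem_Ici ht.le ht
      (hasDerivAt_expQuad a b c 0)
  have hzero (a b c : ℝ) : expQuad a b c 0 = a - c := by simp [expQuad]
  rw [slope_def_field, hzero, hzero, sub_zero, lt_div_iff₀ ht] at hslope
  linarith

end

theorem stmt_12 (t : ℝ) (ht : t ∈ Set.Ioi (0 : ℝ)) :
    0 < 2 * Real.exp (2 * t) - Real.exp t * (t ^ 2 - 6 * t + 18) + 8 * (t + 2) := by
  have htangent : (2 - 18) + (2 * 2 + 6 - 18) * t < expQuad 2 6 18 t :=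
    tangent_at_zero_lt_expQuad (by norm_num) (by norm_num) (by norm_num) ht
  rw [expQuad] at htangent
  linarith
end
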